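/- Let D be an ADF and let v and w be strongly admissible interpretations of D. Then v ⊔_i w is the supremum of v and w in the set of strongly admissible interpretations of D ordered by ≤_i: v ⊔_i w is strongly admissible, v ≤_i v ⊔_i w, w ≤_i v ⊔_i w, and for every strongly admissible interpretation w' of D with v ≤_i w' and w ≤_i w' it holds that v ⊔_i w ≤_i w'. In particular, every two strongly admissible interpretations of D have a unique supremum among the strongly admissible interpretations. -/

import Mathlib

/-!
The only way the join could fail to lie above `w` is that `v` and `w` decide some argument
differently. They never do: if `a` is justified under `v` by parents `P` and under `w` by parents
`P'`, then by induction on the first justification `v` and `w` agree on `P ∩ P'`, so a single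
two-valued assignment completes both `v|_P` and `w|_P'`, and the acceptance condition of `a`
takes there the value given by `v` as well as the one given by `w`. The join is strongly
admissible because justifications survive a gain of information.
-/

/-- Three truth values: true, false, undecided. -/
inductive TV : Type
  | t | f | u
deriving DecidableEq, Repr

/-- The information order on truth values: u <_i t and u <_i f. -/
def TV.ile (x y : TV) : Prop := x = TV.u ∨ x = y

/-- The information order on interpretations, extended pointwise. -/
def ILE {A : Type*} (v w : A → TV) : Prop := ∀ a, TV.ile (v a) (w a)

/-- An abstract dialectical framework on a set of arguments `A`:
each argument `a` has an acceptance condition `C a : (A → Bool) → Bool`. -/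
structure ADF (A : Type*) where
  C : A → (A → Bool) → Bool

/-- The trivial interpretation mapping every argument to undecided. -/
def trivialInterp (A : Type*) : A → TV := fun _ => TV.u

/-- The parents of `a` are the arguments on which its acceptance condition depends. -/
def ADF.parents {A : Type*} [DecidableEq A] (D : ADF A) (a : A) : Set A :=
  {b | ∃ w : A → Bool, D.C a w ≠ D.C a (Function.update w b (!w b))}

/-- A two-valued assignment `w` completes a three-valued interpretation `v`. -/
def Completes {A : Type*} (w : A → Bool) (v : A → TV) : Prop :=
  ∀ b, (v b = TV.t → w b = true) ∧ (v b = TV.f → w b = false)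

/-- `φ` is irrefutable under `v`: every completion of `v` makes `φ` true. -/
def Irrefutable {A : Type*} (φ : (A → Bool) → Bool) (v : A → TV) : Prop :=
  ∀ w : A → Bool, Completes w v → φ w = true

/-- `φ` is unsatisfiable under `v`: every completion of `v` makes `φ` false. -/
def Unsat {A : Type*} (φ : (A → Bool) → Bool) (v : A → TV) : Prop :=
  ∀ w : A → Bool, Completes w v → φ w = false

open Classical in
/-- The characteristic operator Γ_D of an ADF. -/
noncomputable def Gamma {A : Type*} (D : ADF A) (v : A → TV) : A → TV := fun a =>
  if Irrefutable (D.C a) v then TV.t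
  else if Unsat (D.C a) v then TV.f
  else TV.u

open Classical in
/-- `v|_P`: agrees with `v` on `P` and is undecided elsewhere. -/
noncomputable def restrictTV {A : Type*} (v : A → TV) (P : Set A) : A → TV :=
  fun b => if b ∈ P then v b else TV.u

/-- Strong acceptability/deniability of an argument with respect to interpretation `v`
and set `S`, relative to an excluded set `E` (the first index). An argument `a` with
`v a = t` (resp. `v a = f`) is strongly acceptable (resp. strongly deniable) iff there is
`P ⊆ (parents a ∩ S) \ E` with `φ_a^{v|_P}` irrefutable (resp. unsatisfiable) and every
`p ∈ P` strongly acceptable/deniable relative to `E ∪ {p}`. -/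
inductive SJrel {A : Type*} [DecidableEq A] (D : ADF A) (v : A → TV) (S : Set A) :
    Set A → A → Prop
  | acc (E : Set A) (a : A) (P : Set A)
      (ha : v a = TV.t)
      (hP : P ⊆ (D.parents a ∩ S) \ E)
      (hirr : Irrefutable (D.C a) (restrictTV v P))
      (hrec : ∀ p ∈ P, SJrel D v S (E ∪ {p}) p) : SJrel D v S E a
  | den (E : Set A) (a : A) (P : Set A)
      (ha : v a = TV.f)
      (hP : P ⊆ (D.parents a ∩ S) \ E)
      (hunsat : Unsat (D.C a) (restrictTV v P))
      (hrec : ∀ p ∈ P, SJrel D v S (E ∪ {p}) p) : SJrel D v S E a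

/-- `a` is strongly acceptable/deniable w.r.t. `v` and `S`
(i.e., relative to the excluded set `{a}`). -/
def StronglyJustified {A : Type*} [DecidableEq A] (D : ADF A) (v : A → TV)
    (S : Set A) (a : A) : Prop :=
  SJrel D v S {a} a

/-- `S` is a least set for `a` with respect to `v`. -/
def LeastSet {A : Type*} [DecidableEq A] (D : ADF A) (v : A → TV)
    (a : A) (S : Set A) : Prop :=
  StronglyJustified D v S a ∧
  ∀ S' : Set A, S'.ncard < S.ncard → ¬ StronglyJustified D v S' a

/-- An interpretation is strongly admissible iff every argument assigned `t`/`f`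
is strongly acceptable/deniable w.r.t. `v` and some set `S`. -/
def StronglyAdmissible {A : Type*} [DecidableEq A] (D : ADF A) (v : A → TV) : Prop :=
  ∀ a : A, v a ≠ TV.u → ∃ S : Set A, StronglyJustified D v S a

/-- `g` is the grounded interpretation of `D`: the least fixed point of `Γ_D`. -/
def IsGrounded {A : Type*} (D : ADF A) (g : A → TV) : Prop :=
  Gamma D g = g ∧ ∀ w : A → TV, Gamma D w = w → ILE g w

/-- An interpretation is admissible iff `v ≤_i Γ_D(v)`. -/
def Admissible {A : Type*} (D : ADF A) (v : A → TV) : Prop :=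
  ILE v (Gamma D v)

/-- An interpretation is conflict-free. -/
def ConflictFree {A : Type*} (D : ADF A) (v : A → TV) : Prop :=
  ∀ a : A, (v a = TV.t → ∃ w : A → Bool, Completes w v ∧ D.C a w = true) ∧
           (v a = TV.f → Unsat (D.C a) v)

/-- The join of two interpretations: take `v`'s value where defined, else `w`'s. -/
def joinI {A : Type*} (v w : A → TV) : A → TV :=
  fun a => if v a = TV.u then w a else v a

section Interpretations

variable {A : Type*} {v w z : A → TV} {φ : (A → Bool) → Bool}

/-- Compatibility of two interpretations: they agree on every argument decided by both. This is
what makes the left-biased `joinI` an upper bound of its second argument. -/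
def Compatible (v w : A → TV) : Prop :=
  ∀ a, v a ≠ TV.u → w a ≠ TV.u → v a = w a

theorem ILE.eq_of_eq_of_ne (h : ILE v w) {a : A} {x : TV} (ha : v a = x) (hx : x ≠ TV.u) :
    w a = x :=
  ((h a).resolve_left (ha.trans_ne hx)).symm.trans ha

theorem ILE.antisymm (hvw : ILE v w) (hwv : ILE w v) : v = w := by
  funext a
  rcases hvw a with hva | heq
  · rcases hwv a with hwa | heq
    · exact hva.trans hwa.symm
    · exact heq.symm
  · exact heq

theorem restrictTV_mono (h : ILE v w) (P : Set A) : ILE (restrictTV v P) (restrictTV w P) := by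
  intro a
  by_cases ha : a ∈ P
  · simpa only [restrictTV, if_pos ha] using h a
  · exact Or.inl (if_neg ha)

theorem Completes.of_ile {x : A → Bool} (hx : Completes x w) (h : ILE v w) : Completes x v :=
  fun a => ⟨fun ha => (hx a).1 (h.eq_of_eq_of_ne ha (by decide)),
    fun ha => (hx a).2 (h.eq_of_eq_of_ne ha (by decide))⟩

theorem Irrefutable.mono (hφ : Irrefutable φ v) (h : ILE v w) : Irrefutable φ w :=
  fun x hx => hφ x (hx.of_ile h)

theorem Unsat.mono (hφ : Unsat φ v) (h : ILE v w) : Unsat φ w :=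
  fun x hx => hφ x (hx.of_ile h)

theorem Compatible.symm (h : Compatible v w) : Compatible w v :=
  fun a hwa hva => (h a hva hwa).symm

theorem compatible_restrictTV {P Q : Set A} (h : ∀ a ∈ P, a ∈ Q → v a = w a) :
    Compatible (restrictTV v P) (restrictTV w Q) := by
  intro a hva hwa
  have haP : a ∈ P := by_contra fun ha => hva (if_neg ha)
  have haQ : a ∈ Q := by_contra fun ha => hwa (if_neg ha)
  simpa only [restrictTV, if_pos haP, if_pos haQ] using h a haP haQ

theorem Compatible.exists_completes (h : Compatible v w) :
    ∃ x : A → Bool, Completes x v ∧ Completes x w := by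
  refine ⟨fun a => decide (v a = TV.t ∨ w a = TV.t), fun a => ?_, fun a => ?_⟩ <;>
  · have := h a
    grind

theorem Compatible.not_unsat (h : Compatible v w) (hφ : Irrefutable φ v) : ¬ Unsat φ w := by
  intro hφ'
  obtain ⟨x, hxv, hxw⟩ := h.exists_completes
  exact Bool.false_ne_true ((hφ' x hxw).symm.trans (hφ x hxv))

theorem joinI_of_eq_u {a : A} (ha : v a = TV.u) : joinI v w a = w a :=
  if_pos ha

theorem joinI_of_ne_u {a : A} (ha : v a ≠ TV.u) : joinI v w a = v a :=
  if_neg ha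

theorem ile_joinI_left (v w : A → TV) : ILE v (joinI v w) :=
  fun _ => or_iff_not_imp_left.2 fun ha => (joinI_of_ne_u ha).symm

theorem Compatible.ile_joinI_right (h : Compatible v w) : ILE w (joinI v w) := by
  refine fun a => or_iff_not_imp_left.2 fun hwa => ?_
  by_cases hva : v a = TV.u
  · exact (joinI_of_eq_u hva).symm
  · exact (h a hva hwa).symm.trans (joinI_of_ne_u hva).symm

theorem joinI_ile (hv : ILE v z) (hw : ILE w z) : ILE (joinI v w) z := by
  intro a
  by_cases hva : v a = TV.u
  · exact joinI_of_eq_u hva ▸ hw a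
  · exact joinI_of_ne_u hva ▸ hv a

end Interpretations

section StrongAdmissibility

variable {A : Type*} [DecidableEq A] {D : ADF A} {v w : A → TV}

theorem SJrel.mono {S E : Set A} {a : A} (h : SJrel D v S E a) (hvw : ILE v w) :
    SJrel D w S E a := by
  induction h with
  | acc E a P ha hP hirr _ ih =>
    have hwa : w a = TV.t := hvw.eq_of_eq_of_ne ha (by decide)
    exact .acc E a P hwa hP (hirr.mono (restrictTV_mono hvw P)) ih
  | den E a P ha hP hunsat _ ih =>
    have hwa : w a = TV.f := hvw.eq_of_eq_of_ne ha (by decide)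
    exact .den E a P hwa hP (hunsat.mono (restrictTV_mono hvw P)) ih

theorem SJrel.eq_of_sjrel {S T E F : Set A} {a : A} (hv : SJrel D v S E a)
    (hw : SJrel D w T F a) : v a = w a := by
  induction hv generalizing F with
  | acc _ a P hva _ hirr _ ih =>
    cases hw with
    | acc _ _ Q hwa => exact hva.trans hwa.symm
    | den _ _ Q _ _ hunsat hQ =>
      have hcompat : Compatible (restrictTV v P) (restrictTV w Q) :=
        compatible_restrictTV fun p hpP hpQ => ih p hpP (hQ p hpQ)
      exact absurd hunsat (hcompat.not_unsat hirr)
  | den _ a P hva _ hunsat _ ih =>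
    cases hw with
    | den _ _ Q hwa => exact hva.trans hwa.symm
    | acc _ _ Q _ _ hirr hQ =>
      have hcompat : Compatible (restrictTV v P) (restrictTV w Q) :=
        compatible_restrictTV fun p hpP hpQ => ih p hpP (hQ p hpQ)
      exact absurd hunsat (hcompat.symm.not_unsat hirr)

theorem StronglyAdmissible.compatible (hv : StronglyAdmissible D v)
    (hw : StronglyAdmissible D w) : Compatible v w := by
  intro a hva hwa
  obtain ⟨S, hS⟩ := hv a hva
  obtain ⟨T, hT⟩ := hw a hwa
  exact hS.eq_of_sjrel hT

theorem StronglyAdmissible.joinI (hv : StronglyAdmissible D v) (hw : StronglyAdmissible D w) :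
    StronglyAdmissible D (joinI v w) := by
  intro a ha
  by_cases hva : v a = TV.u
  · obtain ⟨S, hS⟩ := hw a fun hwa => ha ((joinI_of_eq_u hva).trans hwa)
    exact ⟨S, hS.mono (hv.compatible hw).ile_joinI_right⟩
  · obtain ⟨S, hS⟩ := hv a hva
    exact ⟨S, hS.mono (ile_joinI_left v w)⟩

theorem join_is_supremum_general (hv : StronglyAdmissible D v) (hw : StronglyAdmissible D w) :
    StronglyAdmissible D (joinI v w) ∧
      ILE v (joinI v w) ∧ ILE w (joinI v w) ∧
      (∀ z : A → TV, ILE v z → ILE w z → ILE (joinI v w) z) ∧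
      ∀ s : A → TV, ILE v s → ILE w s →
        (∀ w' : A → TV, StronglyAdmissible D w' → ILE v w' → ILE w w' → ILE s w') →
        s = joinI v w := by
  have hjoin : StronglyAdmissible D (joinI v w) := hv.joinI hw
  have hl : ILE v (joinI v w) := ile_joinI_left v w
  have hr : ILE w (joinI v w) := (hv.compatible hw).ile_joinI_right
  refine ⟨hjoin, hl, hr, fun z => joinI_ile, fun s hvs hws hmin => ?_⟩
  exact (hmin _ hjoin hl hr).antisymm (joinI_ile hvs hws)

end StrongAdmissibility

/-- The join of two strongly admissible interpretations is their
unique supremum among the strongly admissible interpretations. -/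
theorem join_is_supremum {A : Type*} [Fintype A] [DecidableEq A]
    (D : ADF A) (v w : A → TV)
    (hv : StronglyAdmissible D v) (hw : StronglyAdmissible D w) :
    StronglyAdmissible D (joinI v w) ∧
      ILE v (joinI v w) ∧ ILE w (joinI v w) ∧
      (∀ w' : A → TV, StronglyAdmissible D w' → ILE v w' → ILE w w' →
        ILE (joinI v w) w') ∧
      ∀ s : A → TV,
        (StronglyAdmissible D s ∧ ILE v s ∧ ILE w s ∧
          ∀ w' : A → TV, StronglyAdmissible D w' → ILE v w' → ILE w w' → ILE s w') →
        s = joinI v w := by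
  obtain ⟨hjoin, hl, hr, hleast, hunique⟩ := join_is_supremum_general hv hw
  exact ⟨hjoin, hl, hr, fun z _ => hleast z, fun s ⟨_, hvs, hws, hmin⟩ => hunique s hvs hws hmin⟩
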